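/- Let R be a commutative noetherian ring, N a pure-injective R-module, i ≥ 0 an integer, and M an R-module. Then Ext^i_R(M, N) = 0 if and only if Ext^i_R(M, Hom_R(R_m, N)) = 0 for every maximal ideal m of R. -/

import Mathlib

open CategoryTheory Opposite

noncomputable section

/-- Vanishing of the `n`-th Ext group of two `R`-modules. -/
def extV (R : Type) [Ring R] (M N : ModuleCat.{0} R) (n : ℕ) : Prop :=
  Subsingleton (((_root_.Ext ℤ (ModuleCat.{0} R) n).obj (op M)).obj N)

/-- `f : A →ₗ[R] B` is a pure monomorphism: it is injective and stays injective
after tensoring with any `R`-module. -/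
def IsPureMono (R : Type) [CommRing R] {A B : Type} [AddCommGroup A] [Module R A]
    [AddCommGroup B] [Module R B] (f : A →ₗ[R] B) : Prop :=
  Function.Injective f ∧
    ∀ (Q : Type) [AddCommGroup Q] [Module R Q], Function.Injective (LinearMap.lTensor Q f)

/-- An `R`-module `N` is pure-injective if it is injective with respect to
pure monomorphisms. -/
def PureInjective (R : Type) [CommRing R] (N : Type) [AddCommGroup N] [Module R N] : Prop :=
  ∀ (A B : Type) [AddCommGroup A] [Module R A] [AddCommGroup B] [Module R B]
    (f : A →ₗ[R] B), IsPureMono R f → ∀ g : A →ₗ[R] N, ∃ h : B →ₗ[R] N, h.comp f = g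

/-!
Let `E` be the cokernel of `Hom(Y, N) → Hom(X, N)` for a map `X → Y`. As `N` is pure-injective, it
is a direct summand of its double character module, so the map `Hom(Y, N) → Hom(X, N)` is a retract
of the character dual of a map `V → W`, and `E` is a direct summand of the dual of `ker (V → W)`.
Hence `E` is pure-injective, and, for `F` flat, `Hom(F, E)` is the cokernel of
`Hom(Y, Hom(F, N)) → Hom(X, Hom(F, N))`. Now `Ext^i(M, N)` vanishes iff such an `E` does, where
`X → Y` is read off a projective resolution of `M`, so it remains to see that `E = 0` if
`Hom(R_𝔪, E) = 0` for all `𝔪`.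

Let `𝒳` be the class of modules `X` with `Ext^n(X, E) = 0` for all `n`. Since `R_𝔪` is flat and `E`
is pure-injective, `R_𝔪 ∈ 𝒳`, and by dimension shifting `𝒳` contains every `R_𝔪`-module, for
instance `κ(𝔭)` with `𝔭 ≤ 𝔪`. An ideal `I` maximal with `R ⧸ I ∉ 𝒳` is a prime `𝔭` by the Oka
principle; but every element of `κ(𝔭) / (R ⧸ 𝔭)` has annihilator larger than `𝔭`, so that
`κ(𝔭) / (R ⧸ 𝔭) ∈ 𝒳`, again by dimension shifting, and therefore `R ⧸ 𝔭 ∈ 𝒳`. Thus no such `I`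
exists, `R ∈ 𝒳` and `E = Hom(R, E) = 0`.
-/

section ExtOrthogonal

open Limits Abelian

universe w v u

variable {C : Type u} [Category.{v} C] [Abelian C] [HasExt.{w} C]

lemma subsingleton_ext_succ_of_shortExact {S : ShortComplex C} (hS : S.ShortExact) {E : C} {n : ℕ}
    (h₁ : Subsingleton (Ext.{w} S.X₁ E n)) (h₂ : Subsingleton (Ext.{w} S.X₂ E (n + 1))) :
    Subsingleton (Ext.{w} S.X₃ E (n + 1)) := by
  refine subsingleton_of_forall_eq 0 fun x ↦ ?_
  obtain ⟨y, rfl⟩ := Ext.contravariant_sequence_exact₃ hS E x (Subsingleton.elim _ _)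
    (add_comm 1 n)
  rw [Subsingleton.elim y 0, Ext.comp_zero]

lemma subsingleton_ext_one_of_shortExact {S : ShortComplex C} (hS : S.ShortExact) {E : C}
    (hE : Function.Surjective fun h : S.X₂ ⟶ E ↦ S.f ≫ h)
    (h₂ : Subsingleton (Ext.{w} S.X₂ E 1)) : Subsingleton (Ext.{w} S.X₃ E 1) := by
  refine subsingleton_of_forall_eq 0 fun x ↦ ?_
  obtain ⟨y, rfl⟩ := Ext.contravariant_sequence_exact₃ hS E x (Subsingleton.elim _ _)
    (add_zero 1)
  obtain ⟨u, rfl⟩ := Ext.homEquiv₀.symm.surjective y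
  obtain ⟨v, rfl⟩ := hE u
  rw [Ext.homEquiv₀_symm_apply, ← Ext.mk₀_comp_mk₀, hS.extClass_comp_assoc]

/-- The left `Ext`-orthogonal class of `E`: the objects `X` with `Ext^n(X, E) = 0` for all
`n ≥ 0`. -/
def ExtOrthogonal (E : C) : ObjectProperty C :=
  fun X ↦ ∀ n, Subsingleton (Ext.{w} X E n)

namespace ExtOrthogonal

variable {E : C}

instance : (ExtOrthogonal.{w} E).IsClosedUnderIsomorphisms where
  of_iso {X Y} e hX n := by
    refine subsingleton_of_forall_eq 0 fun y ↦ ?_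
    have := hX n
    rw [← Ext.mk₀_id_comp y, ← e.inv_hom_id, ← Ext.mk₀_comp_mk₀,
      Ext.comp_assoc_of_second_deg_zero,
      Subsingleton.elim ((Ext.mk₀ e.hom).comp y (zero_add n)) 0, Ext.comp_zero]

lemma of_shortExact₁ {S : ShortComplex C} (hS : S.ShortExact)
    (h₂ : ExtOrthogonal.{w} E S.X₂) (h₃ : ExtOrthogonal.{w} E S.X₃) :
    ExtOrthogonal.{w} E S.X₁ := fun n ↦ by
  have := h₂ n
  have := h₃ (1 + n)
  refine subsingleton_of_forall_eq 0 fun x ↦ ?_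
  obtain ⟨y, rfl⟩ := Ext.contravariant_sequence_exact₁ hS E x rfl (Subsingleton.elim _ _)
  rw [Subsingleton.elim y 0, Ext.comp_zero]

lemma of_shortExact₂ {S : ShortComplex C} (hS : S.ShortExact)
    (h₁ : ExtOrthogonal.{w} E S.X₁) (h₃ : ExtOrthogonal.{w} E S.X₃) :
    ExtOrthogonal.{w} E S.X₂ := fun n ↦ by
  have := h₁ n
  have := h₃ n
  refine subsingleton_of_forall_eq 0 fun x ↦ ?_
  obtain ⟨y, rfl⟩ := Ext.contravariant_sequence_exact₂ hS E x (Subsingleton.elim _ _)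
  rw [Subsingleton.elim y 0, Ext.comp_zero]

-- Dimension shifting: a class of degree `n + 1` on `S.X₃` comes from one of degree `n` on `S.X₁`.
lemma of_forall_exists_shortExact {P : ObjectProperty C}
    (hP : ∀ X, P X → ∃ S : ShortComplex C,
      S.ShortExact ∧ S.X₃ = X ∧ P S.X₁ ∧ ExtOrthogonal.{w} E S.X₂) :
    P ≤ ExtOrthogonal.{w} E := by
  suffices h : ∀ n X, P X → Subsingleton (Ext.{w} X E n) from fun X hX n ↦ h n X hX
  intro n
  induction n with
  | zero =>
    intro X hX
    obtain ⟨S, hS, rfl, -, h₂⟩ := hP X hX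
    have := h₂ 0
    have := hS.epi_g
    exact (Ext.precomp_mk₀_injective_of_epi E S.g).subsingleton
  | succ n ih =>
    intro X hX
    obtain ⟨S, hS, rfl, h₁, h₂⟩ := hP X hX
    exact subsingleton_ext_succ_of_shortExact hS (ih _ h₁) (h₂ (n + 1))

end ExtOrthogonal

variable {ι : Type*} {X : ι → C} {c : Cofan X}

lemma exists_ext_inj_comp_eq_of_injective (hc : IsColimit c) {I : C} [Injective I] {n : ℕ}
    (z : ∀ i, Ext.{w} (X i) I n) :
    ∃ z' : Ext.{w} c.pt I n, ∀ i, (Ext.mk₀ (c.inj i)).comp z' (zero_add n) = z i := by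
  cases n with
  | zero =>
    choose f hf using fun i ↦ Ext.homEquiv₀.symm.surjective (z i)
    refine ⟨Ext.mk₀ (Cofan.IsColimit.desc hc f), fun i ↦ ?_⟩
    rw [Ext.mk₀_comp_mk₀, Cofan.IsColimit.fac, ← hf, Ext.homEquiv₀_symm_apply]
  | succ n => exact ⟨0, fun i ↦ by rw [Ext.eq_zero_of_injective (z i), Ext.comp_zero]⟩

lemma ext_eq_zero_of_forall_inj_comp_eq_zero [EnoughInjectives C] (hc : IsColimit c) {n : ℕ}
    {E : C} (x : Ext.{w} c.pt E n)
    (hx : ∀ i, (Ext.mk₀ (c.inj i)).comp x (zero_add n) = 0) : x = 0 := by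
  induction n generalizing E with
  | zero =>
    obtain ⟨f, rfl⟩ := Ext.homEquiv₀.symm.surjective x
    have hf : f = 0 := Cofan.IsColimit.hom_ext hc _ _ fun i ↦ by
      have := hx i
      rw [Ext.homEquiv₀_symm_apply, Ext.mk₀_comp_mk₀, Ext.mk₀_eq_zero_iff] at this
      rw [this, comp_zero]
    rw [hf, Ext.homEquiv₀_symm_apply, Ext.mk₀_zero]
  | succ n ih =>
    let S := ShortComplex.mk (Injective.ι E) (cokernel.π _) (cokernel.condition _)
    have hS : S.ShortExact := { exact := ShortComplex.exact_cokernel _ }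
    obtain ⟨y, rfl⟩ := Ext.covariant_sequence_exact₁ _ hS x
      (Ext.eq_zero_of_injective (I := Injective.under E) _) rfl
    have hy (i) : ∃ z : Ext (X i) S.X₂ n, z.comp (Ext.mk₀ S.g) (add_zero n) =
        (Ext.mk₀ (c.inj i)).comp y (zero_add n) :=
      Ext.covariant_sequence_exact₃ _ hS _ rfl <| by
        rw [← hx i, Ext.comp_assoc]
        simp
    choose z hz using hy
    obtain ⟨z', hz'⟩ := exists_ext_inj_comp_eq_of_injective (I := Injective.under E) hc z
    have hy : y = z'.comp (Ext.mk₀ S.g) (add_zero n) := by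
      refine sub_eq_zero.1 (ih _ fun i ↦ ?_)
      rw [sub_eq_add_neg, Ext.comp_add, Ext.comp_neg, ← hz i, ← hz' i,
        Ext.comp_assoc_of_third_deg_zero, add_neg_cancel]
    rw [hy, Ext.comp_assoc_of_second_deg_zero, hS.comp_extClass, Ext.comp_zero]

lemma ExtOrthogonal.of_isColimit_cofan [EnoughInjectives C] (hc : IsColimit c) {E : C}
    (hX : ∀ i, ExtOrthogonal.{w} E (X i)) : ExtOrthogonal.{w} E c.pt := fun n ↦
  subsingleton_of_forall_eq 0 fun x ↦ ext_eq_zero_of_forall_inj_comp_eq_zero hc x fun i ↦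
    have := hX i n
    Subsingleton.elim _ _

end ExtOrthogonal

section FlatAndTorsion

open scoped DirectSum

variable {R : Type*} [CommRing R]

lemma flat_ker_of_surjective {F P : Type*} [AddCommGroup F] [Module R F] [AddCommGroup P]
    [Module R P] [Module.Flat R F] [Module.Flat R P] {g : P →ₗ[R] F}
    (hg : Function.Surjective g) : Module.Flat R (LinearMap.ker g) := by
  rw [Module.Flat.iff_rTensor_injective']
  intro I
  have hK : Function.Injective ((LinearMap.ker g).subtype.lTensor I) :=
    LinearMap.lTensor_injective_of_exact_of_flat g hg _ (Submodule.injective_subtype _)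
      (LinearMap.exact_subtype_ker_map _) I
  have hP : Function.Injective (I.subtype.rTensor P) :=
    Module.Flat.rTensor_preserves_injective_linearMap _ I.injective_subtype
  have h := hP.comp hK
  rw [← LinearMap.coe_comp, LinearMap.rTensor_comp_lTensor, ← LinearMap.lTensor_comp_rTensor] at h
  exact Function.Injective.of_comp h

lemma torsionOf_le_torsionOf_apply {X Y : Type*} [AddCommGroup X] [Module R X] [AddCommGroup Y]
    [Module R Y] (f : X →ₗ[R] Y) (x : X) : Ideal.torsionOf R X x ≤ Ideal.torsionOf R Y (f x) := by
  intro r hr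
  rw [Ideal.mem_torsionOf_iff] at hr ⊢
  rw [← map_smul, hr, map_zero]

lemma torsionOf_apply_of_injective {X Y : Type*} [AddCommGroup X] [Module R X] [AddCommGroup Y]
    [Module R Y] {f : X →ₗ[R] Y} (hf : Function.Injective f) (x : X) :
    Ideal.torsionOf R Y (f x) = Ideal.torsionOf R X x := by
  ext r
  rw [Ideal.mem_torsionOf_iff, Ideal.mem_torsionOf_iff, ← map_smul, map_eq_zero_iff f hf]

lemma lt_torsionOf_directSum {ι : Type*} {X : ι → Type*} [∀ i, AddCommGroup (X i)]
    [∀ i, Module R (X i)] {p : Ideal R} [p.IsPrime] (hX : ∀ i (x : X i), p < Ideal.torsionOf R _ x)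
    (y : ⨁ i, X i) : p < Ideal.torsionOf R _ y := by
  classical
  induction y using DirectSum.induction_on with
  | zero => simpa using (Ideal.IsPrime.ne_top ‹_›).lt_top
  | of i x => exact (hX i x).trans_le (torsionOf_le_torsionOf_apply (DirectSum.lof R ι X i) x)
  | add x y hx hy =>
    refine lt_of_lt_of_le (b := Ideal.torsionOf R _ x ⊓ Ideal.torsionOf R _ y) ?_ fun r hr ↦ ?_
    · rw [lt_iff_le_not_ge, Ideal.IsPrime.inf_le ‹_›, not_or]
      exact ⟨le_inf hx.le hy.le, hx.not_ge, hy.not_ge⟩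
    · obtain ⟨hrx, hry⟩ := hr
      rw [SetLike.mem_coe, Ideal.mem_torsionOf_iff] at hrx hry
      rw [Ideal.mem_torsionOf_iff, smul_add, hrx, hry, add_zero]

lemma lt_torsionOf_residueField_mkQ (p : Ideal R) [p.IsPrime]
    (x : p.ResidueField ⧸ (Algebra.linearMap (R ⧸ p) p.ResidueField).range.restrictScalars R) :
    p < Ideal.torsionOf R _ x := by
  obtain ⟨x, rfl⟩ := Submodule.mkQ_surjective _ x
  obtain ⟨a, b, hb, rfl⟩ := IsFractionRing.div_surjective (A := R ⧸ p) x
  obtain ⟨s, rfl⟩ := Ideal.Quotient.mk_surjective b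
  have hs : s ∉ p := fun h ↦ nonZeroDivisors.ne_zero hb (Ideal.Quotient.eq_zero_iff_mem.2 h)
  have hs₀ : algebraMap R p.ResidueField s ≠ 0 := by
    rwa [ne_eq, Ideal.algebraMap_residueField_eq_zero]
  refine SetLike.lt_iff_le_and_exists.2 ⟨fun r hr ↦ ?_, s, ?_, hs⟩
  · rw [Ideal.mem_torsionOf_iff, ← map_smul, Algebra.smul_def,
      Ideal.algebraMap_residueField_eq_zero.2 hr, zero_mul, map_zero]
  · rw [Ideal.mem_torsionOf_iff, ← map_smul, Submodule.mkQ_apply, Submodule.Quotient.mk_eq_zero]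
    refine ⟨a, ?_⟩
    rw [Algebra.smul_def]
    exact (mul_div_cancel₀ _ hs₀).symm

end FlatAndTorsion

section ModuleExtOrthogonal

open Abelian
open scoped DirectSum

universe u

variable {R : Type u} [CommRing R] {E : Type u} [AddCommGroup E] [Module R E]

lemma subsingleton_ext_free_succ (ι : Type u) (N : ModuleCat.{u} R) (n : ℕ) :
    Subsingleton (Ext.{u} (ModuleCat.of R (ι →₀ R)) N (n + 1)) :=
  have : Projective (ModuleCat.of R (ι →₀ R)) := (IsProjective.iff_projective _).1 inferInstance
  Ext.subsingleton_of_projective _ _ _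

lemma extOrthogonal_iff_of_linearEquiv {X Y : Type u} [AddCommGroup X] [Module R X] [AddCommGroup Y]
    [Module R Y] (e : X ≃ₗ[R] Y) : ExtOrthogonal.{u} (ModuleCat.of R E) (ModuleCat.of R X) ↔
      ExtOrthogonal.{u} (ModuleCat.of R E) (ModuleCat.of R Y) :=
  (ExtOrthogonal _).prop_iff_of_iso e.toModuleIso

lemma extOrthogonal_of_quotient {X : Type u} [AddCommGroup X] [Module R X] (Y : Submodule R X)
    (hY : ExtOrthogonal.{u} (ModuleCat.of R E) (ModuleCat.of R Y))
    (hXY : ExtOrthogonal.{u} (ModuleCat.of R E) (ModuleCat.of R (X ⧸ Y))) :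
    ExtOrthogonal.{u} (ModuleCat.of R E) (ModuleCat.of R X) :=
  ExtOrthogonal.of_shortExact₂ (ModuleCat.shortComplex_shortExact
    (ModuleCat.shortComplexOfCompEqZero Y.subtype Y.mkQ (by ext; simp))
    (LinearMap.exact_subtype_mkQ Y) Y.injective_subtype Y.mkQ_surjective) hY hXY

lemma extOrthogonal_directSum {ι : Type u} {X : ι → Type u} [∀ i, AddCommGroup (X i)]
    [∀ i, Module R (X i)]
    (hX : ∀ i, ExtOrthogonal.{u} (ModuleCat.of R E) (ModuleCat.of R (X i))) :
    ExtOrthogonal.{u} (ModuleCat.of R E) (ModuleCat.of R (⨁ i, X i)) := by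
  classical
  exact ExtOrthogonal.of_isColimit_cofan
    (ModuleCat.coproductCoconeIsColimit fun i ↦ ModuleCat.of R (X i)) hX

lemma extOrthogonal_of_forall_lt_torsionOf {p : Ideal R} [p.IsPrime]
    (hp : ∀ J, p < J → ExtOrthogonal.{u} (ModuleCat.of R E) (ModuleCat.of R (R ⧸ J)))
    {X : Type u} [AddCommGroup X] [Module R X] (hX : ∀ x : X, p < Ideal.torsionOf R X x) :
    ExtOrthogonal.{u} (ModuleCat.of R E) (ModuleCat.of R X) := by
  classical
  let P : ObjectProperty (ModuleCat.{u} R) := fun X ↦ ∀ x : X, p < Ideal.torsionOf R X x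
  refine ExtOrthogonal.of_forall_exists_shortExact (P := P) (fun X hX ↦ ?_) _ hX
  let g : (⨁ x : X, R ∙ x) →ₗ[R] X := DirectSum.toModule R X X fun x ↦ (R ∙ x).subtype
  have hg : Function.Surjective g := fun x ↦
    ⟨DirectSum.lof R X _ x ⟨x, Submodule.mem_span_singleton_self x⟩, by simp [g]⟩
  refine ⟨_, LinearMap.shortExact_shortComplexKer hg, rfl, fun y ↦ ?_,
    extOrthogonal_directSum fun x ↦ ?_⟩
  · have hspan (x : X) (z : R ∙ x) : p < Ideal.torsionOf R (R ∙ x) z := by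
      rw [← torsionOf_apply_of_injective (R ∙ x).injective_subtype]
      exact hX _
    have hy := lt_torsionOf_directSum hspan y.1
    rwa [← (LinearMap.ker g).subtype_apply,
      torsionOf_apply_of_injective (Submodule.injective_subtype _)] at hy
  · exact (extOrthogonal_iff_of_linearEquiv (Ideal.quotTorsionOfEquivSpanSingleton R X x)).1
      (hp _ (hX x))

lemma isOka_extOrthogonal_quotient : Ideal.IsOka fun I : Ideal R ↦
    ExtOrthogonal.{u} (ModuleCat.of R E) (ModuleCat.of R (R ⧸ I)) where
  top n := subsingleton_of_forall_eq 0 fun x ↦ by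
    have : Subsingleton (R ⧸ (⊤ : Ideal R)) := Ideal.Quotient.subsingleton_iff.2 rfl
    rw [← Ext.mk₀_id_comp x, (ModuleCat.isZero_of_subsingleton _).eq_of_src (𝟙 _) 0,
      Ext.mk₀_zero, Ext.zero_comp]
  oka {I a} hsup hcolon := by
    refine extOrthogonal_of_quotient (Submodule.map I.mkQ (I ⊔ Ideal.span {a})) ?_
      ((extOrthogonal_iff_of_linearEquiv
        (Submodule.quotientQuotientEquivQuotient I _ le_sup_left)).2 hsup)
    have hmap : Submodule.map I.mkQ (I ⊔ Ideal.span {a}) = R ∙ I.mkQ a := by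
      rw [Submodule.map_sup, Submodule.mkQ_map_self, bot_sup_eq, Ideal.span, Submodule.map_span,
        Set.image_singleton]
    have htors : Ideal.torsionOf R (R ⧸ I) (I.mkQ a) = I.colon (Ideal.span {a}) := by
      ext r
      rw [Ideal.mem_torsionOf_iff, ← map_smul, Submodule.mkQ_apply, Submodule.Quotient.mk_eq_zero,
        Ideal.mem_colon_span_singleton, smul_eq_mul]
    rw [hmap, ← extOrthogonal_iff_of_linearEquiv (Ideal.quotTorsionOfEquivSpanSingleton R _ _),
      htors]
    exact hcolon

end ModuleExtOrthogonal

section PureInjectiveVanishing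

open Abelian

variable {R : Type} [CommRing R] {E : Type} [AddCommGroup E] [Module R E]

lemma isPureMono_ker_subtype_of_flat {F P : Type} [AddCommGroup F] [Module R F] [AddCommGroup P]
    [Module R P] [Module.Flat R F] {g : P →ₗ[R] F} (hg : Function.Surjective g) :
    IsPureMono R (LinearMap.ker g).subtype :=
  ⟨Submodule.injective_subtype _, fun Q _ _ ↦ LinearMap.lTensor_injective_of_exact_of_flat g hg _
    (Submodule.injective_subtype _) (LinearMap.exact_subtype_ker_map _) Q⟩

lemma subsingleton_ext_succ_of_flat (hE : PureInjective R E) (n : ℕ) (F : Type) [AddCommGroup F]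
    [Module R F] [Module.Flat R F] :
    Subsingleton (Ext.{0} (ModuleCat.of R F) (ModuleCat.of R E) (n + 1)) := by
  induction n generalizing F with
  | zero =>
    have hsurj := Finsupp.linearCombination_id_surjective R F
    refine subsingleton_ext_one_of_shortExact (LinearMap.shortExact_shortComplexKer hsurj)
      (fun u ↦ ?_) (subsingleton_ext_free_succ F _ 0)
    obtain ⟨v, hv⟩ := hE _ _ _ (isPureMono_ker_subtype_of_flat hsurj) u.hom
    exact ⟨ModuleCat.ofHom v, ModuleCat.hom_ext hv⟩
  | succ n ih =>
    have hsurj := Finsupp.linearCombination_id_surjective R F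
    have := flat_ker_of_surjective hsurj
    exact subsingleton_ext_succ_of_shortExact (LinearMap.shortExact_shortComplexKer hsurj)
      (ih (LinearMap.ker (Finsupp.linearCombination R (id : F → F))))
      (subsingleton_ext_free_succ F _ (n + 1))

lemma extOrthogonal_of_flat (hE : PureInjective R E) (F : Type) [AddCommGroup F] [Module R F]
    [Module.Flat R F] [Subsingleton (F →ₗ[R] E)] :
    ExtOrthogonal.{0} (ModuleCat.of R E) (ModuleCat.of R F)
  | 0 => (Ext.homEquiv₀.trans ModuleCat.homEquiv).subsingleton
  | n + 1 => subsingleton_ext_succ_of_flat hE n F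

lemma extOrthogonal_of_isScalarTower (hE : PureInjective R E) (S : Type) [CommRing S] [Algebra R S]
    [Module.Flat R S] [Subsingleton (S →ₗ[R] E)] (X : Type) [AddCommGroup X] [Module R X]
    [Module S X] [IsScalarTower R S X] :
    ExtOrthogonal.{0} (ModuleCat.of R E) (ModuleCat.of R X) := by
  let P : ObjectProperty (ModuleCat.{0} R) := fun X ↦ ∃ _ : Module S X, IsScalarTower R S X
  refine ExtOrthogonal.of_forall_exists_shortExact (P := P) ?_ _ ⟨inferInstance, inferInstance⟩
  rintro X ⟨_, _⟩
  let g := Finsupp.linearCombination S (id : X → X)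
  have : Module.Flat R (X →₀ S) := Module.Flat.trans R S _
  have : Subsingleton ((X →₀ S) →ₗ[R] E) :=
    ⟨fun f g ↦ Finsupp.lhom_ext' fun i ↦ Subsingleton.elim _ _⟩
  exact ⟨_, LinearMap.shortExact_shortComplexKer (f := g.restrictScalars R)
    (Finsupp.linearCombination_id_surjective S X), rfl,
    ⟨inferInstanceAs (Module S (LinearMap.ker g)),
      inferInstanceAs (IsScalarTower R S (LinearMap.ker g))⟩, extOrthogonal_of_flat hE _⟩

lemma extOrthogonal_residueField (hE : PureInjective R E) {m p : Ideal R} [m.IsPrime] [p.IsPrime]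
    (hpm : p ≤ m) [Subsingleton (Localization.AtPrime m →ₗ[R] E)] :
    ExtOrthogonal.{0} (ModuleCat.of R E) (ModuleCat.of R p.ResidueField) := by
  have hunit (s : m.primeCompl) : IsUnit (algebraMap R p.ResidueField s) := by
    rw [isUnit_iff_ne_zero, ne_eq, Ideal.algebraMap_residueField_eq_zero]
    exact fun hs ↦ s.2 (hpm hs)
  let φ : Localization.AtPrime m →+* p.ResidueField := IsLocalization.lift hunit
  let : Algebra (Localization.AtPrime m) p.ResidueField := φ.toAlgebra
  have : IsScalarTower R (Localization.AtPrime m) p.ResidueField :=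
    .of_algebraMap_eq' (IsLocalization.lift_comp hunit).symm
  have := IsLocalization.flat (Localization.AtPrime m) m.primeCompl
  exact extOrthogonal_of_isScalarTower hE (Localization.AtPrime m) _

lemma extOrthogonal_quotient_of_isPrime (hE : PureInjective R E) {m p : Ideal R} [m.IsPrime]
    [p.IsPrime] (hpm : p ≤ m) [Subsingleton (Localization.AtPrime m →ₗ[R] E)]
    (hp : ∀ J, p < J → ExtOrthogonal.{0} (ModuleCat.of R E) (ModuleCat.of R (R ⧸ J))) :
    ExtOrthogonal.{0} (ModuleCat.of R E) (ModuleCat.of R (R ⧸ p)) := by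
  let f : (R ⧸ p) →ₗ[R] p.ResidueField :=
    (Algebra.linearMap (R ⧸ p) p.ResidueField).restrictScalars R
  have hf : Function.Injective f := IsFractionRing.injective (R ⧸ p) p.ResidueField
  exact ExtOrthogonal.of_shortExact₁ (ModuleCat.shortComplex_shortExact
      (ModuleCat.shortComplexOfCompEqZero f f.range.mkQ f.range_mkQ_comp)
      (LinearMap.exact_map_mkQ_range f) hf f.range.mkQ_surjective)
    (extOrthogonal_residueField hE hpm)
    (extOrthogonal_of_forall_lt_torsionOf hp (lt_torsionOf_residueField_mkQ p))

theorem PureInjective.subsingleton_of_forall_isMaximal [IsNoetherianRing R] (hE : PureInjective R E)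
    (h : ∀ (m : Ideal R) [m.IsMaximal], Subsingleton (Localization.AtPrime m →ₗ[R] E)) :
    Subsingleton E := by
  let P (I : Ideal R) : Prop := ExtOrthogonal.{0} (ModuleCat.of R E) (ModuleCat.of R (R ⧸ I))
  have hP (I : Ideal R) : P I := by
    by_contra hI
    obtain ⟨p, -, hp⟩ := exists_maximal_ge_of_wellFoundedGT (fun I ↦ ¬ P I) I hI
    have := isOka_extOrthogonal_quotient.isPrime_of_maximal_not hp
    obtain ⟨m, hm, hpm⟩ := p.exists_le_maximal this.ne_top
    have := h m
    exact hp.prop (extOrthogonal_quotient_of_isPrime hE hpm fun J hJ ↦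
      not_not.1 (hp.not_prop_of_gt hJ))
  have hR := (extOrthogonal_iff_of_linearEquiv (Submodule.quotEquivOfEqBot (⊥ : Ideal R) rfl)).1
    (hP ⊥) 0
  exact (Ext.homEquiv₀.trans (ModuleCat.homEquiv.trans
    (LinearMap.ringLmapEquivSelf R R E).toEquiv)).subsingleton_congr.1 hR

end PureInjectiveVanishing

section LinearRetract

variable {R : Type*} [CommRing R] {A A' B B' : Type*} [AddCommGroup A] [AddCommGroup A']
  [AddCommGroup B] [AddCommGroup B'] [Module R A] [Module R A'] [Module R B'] [Module R B]

/-- The linear map `f` is a retract of `f'` in the category of linear maps and commutative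
squares. -/
def IsLinearRetract (f : A →ₗ[R] B) (f' : A' →ₗ[R] B') : Prop :=
  ∃ (sA : A →ₗ[R] A') (sB : B →ₗ[R] B') (rA : A' →ₗ[R] A) (rB : B' →ₗ[R] B),
    f' ∘ₗ sA = sB ∘ₗ f ∧ f ∘ₗ rA = rB ∘ₗ f' ∧ rA ∘ₗ sA = .id ∧ rB ∘ₗ sB = .id

/-- Maps out of `F` that land in the image of `f` factor through `f`, i.e. `Hom(F, -)` preserves
the image of `f`. -/
def LiftsAlong (F : Type*) [AddCommGroup F] [Module R F] (f : A →ₗ[R] B) : Prop :=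
  ∀ g : F →ₗ[R] B, g.range ≤ f.range → ∃ h : F →ₗ[R] A, f ∘ₗ h = g

variable {f : A →ₗ[R] B} {f' : A' →ₗ[R] B'}

lemma IsLinearRetract.of_exact {C C' : Type*} [AddCommGroup C] [Module R C] [AddCommGroup C']
    [Module R C'] {g : B →ₗ[R] C} {g' : B' →ₗ[R] C'} (h : IsLinearRetract f f')
    (hfg : Function.Exact f g) (hg : Function.Surjective g) (hfg' : Function.Exact f' g')
    (hg' : Function.Surjective g') : IsLinearRetract g g' := by
  obtain ⟨sA, sB, rA, rB, hs, hr, -, hrs⟩ := h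
  obtain ⟨sC, hsC⟩ := (LinearMap.exact_lcomp_of_exact_of_surjective C' hfg hg (g' ∘ₗ sB)).1 <| by
    rw [LinearMap.lcomp_apply', LinearMap.comp_assoc, ← hs, ← LinearMap.comp_assoc,
      hfg'.linearMap_comp_eq_zero, LinearMap.zero_comp]
  obtain ⟨rC, hrC⟩ := (LinearMap.exact_lcomp_of_exact_of_surjective C hfg' hg' (g ∘ₗ rB)).1 <| by
    rw [LinearMap.lcomp_apply', LinearMap.comp_assoc, ← hr, ← LinearMap.comp_assoc,
      hfg.linearMap_comp_eq_zero, LinearMap.zero_comp]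
  rw [LinearMap.lcomp_apply'] at hsC hrC
  refine ⟨sB, sC, rB, rC, hsC.symm, hrC.symm, hrs, ?_⟩
  rw [← LinearMap.cancel_right hg, LinearMap.comp_assoc, hsC, ← LinearMap.comp_assoc, hrC,
    LinearMap.comp_assoc, hrs, LinearMap.comp_id, LinearMap.id_comp]

variable {F : Type*} [AddCommGroup F] [Module R F]

lemma IsLinearRetract.liftsAlong (h : IsLinearRetract f f') (hf' : LiftsAlong F f') :
    LiftsAlong F f := by
  obtain ⟨sA, sB, rA, rB, hs, hr, -, hrs⟩ := h
  intro g hg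
  obtain ⟨k, hk⟩ := hf' (sB ∘ₗ g) <| by
    rw [LinearMap.range_comp]
    refine (Submodule.map_mono hg).trans ?_
    rw [← LinearMap.range_comp, ← hs]
    exact LinearMap.range_comp_le_range _ _
  refine ⟨rA ∘ₗ k, ?_⟩
  rw [← LinearMap.comp_assoc, hr, LinearMap.comp_assoc, hk, ← LinearMap.comp_assoc, hrs,
    LinearMap.id_comp]

lemma LiftsAlong.surjective_comp_iff {C : Type*} [AddCommGroup C] [Module R C] {g : B →ₗ[R] C}
    (hf : LiftsAlong F f) (hg : LiftsAlong F g) (hfg : Function.Exact f g)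
    (hg' : Function.Surjective g) :
    (Function.Surjective fun k : F →ₗ[R] A ↦ f ∘ₗ k) ↔ Subsingleton (F →ₗ[R] C) := by
  constructor
  · refine fun h ↦ subsingleton_of_forall_eq 0 fun u ↦ ?_
    obtain ⟨v, rfl⟩ := hg u (by simp [LinearMap.range_eq_top.2 hg'])
    obtain ⟨k, rfl⟩ := h v
    rw [← LinearMap.comp_assoc, hfg.linearMap_comp_eq_zero, LinearMap.zero_comp]
  · refine fun _ v ↦ hf v ?_
    rw [← hfg.linearMap_ker_eq, LinearMap.range_le_ker_iff]
    exact Subsingleton.elim _ _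

end LinearRetract

section CharacterModuleDuality

variable {R : Type*} [CommRing R] {V W : Type*} [AddCommGroup V] [Module R V]
  [AddCommGroup W] [Module R W]

lemma exact_characterModule_dual {U : Type*} [AddCommGroup U] [Module R U] {f : U →ₗ[R] V}
    {g : V →ₗ[R] W} (h : Function.Exact f g) :
    Function.Exact (CharacterModule.dual g) (CharacterModule.dual f) := by
  refine LinearMap.exact_of_comp_of_mem_range ?_ fun χ hχ ↦ ?_
  · rw [← CharacterModule.dual_comp, h.linearMap_comp_eq_zero, CharacterModule.dual_zero]
  · have hker : g.rangeRestrict.toAddMonoidHom.ker ≤ AddMonoidHom.ker χ := fun x hx ↦ by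
      obtain ⟨u, rfl⟩ := (h x).1 (congrArg Subtype.val hx)
      exact DFunLike.congr_fun hχ u
    let γ₀ : CharacterModule g.range := AddMonoidHom.liftOfSurjective g.rangeRestrict.toAddMonoidHom
      g.surjective_rangeRestrict ⟨χ, hker⟩
    obtain ⟨γ, hγ⟩ := CharacterModule.dual_surjective_of_injective _ g.range.injective_subtype γ₀
    refine ⟨γ, CharacterModule.ext _ fun x ↦ ?_⟩
    exact (DFunLike.congr_fun hγ (g.rangeRestrict x)).trans
      (AddMonoidHom.liftOfRightInverse_comp_apply _ _ _ ⟨χ, hker⟩ x)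

lemma liftsAlong_characterModule_dual (F : Type*) [AddCommGroup F] [Module R F] [Module.Flat R F]
    (α : V →ₗ[R] W) : LiftsAlong F (CharacterModule.dual α) := by
  intro g hg
  have hexact := exact_characterModule_dual
    (Module.Flat.lTensor_exact F α.exact_subtype_ker_map)
  have hker : g.range ≤ (CharacterModule.dual α.ker.subtype).ker :=
    (exact_characterModule_dual α.exact_subtype_ker_map).linearMap_ker_eq ▸ hg
  obtain ⟨Γ, hΓ⟩ := (hexact (CharacterModule.uncurry g)).1 <|
    CharacterModule.homEquiv.symm.injective <| LinearMap.ext fun x ↦ hker ⟨x, rfl⟩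
  exact ⟨CharacterModule.curry Γ, congrArg CharacterModule.curry hΓ⟩

end CharacterModuleDuality

section PureInjectiveDuality

variable {R : Type} [CommRing R] {N : Type} [AddCommGroup N] [Module R N]

lemma pureInjective_characterModule (H : Type) [AddCommGroup H] [Module R H] :
    PureInjective R (CharacterModule H) := fun _ _ _ _ _ _ f hf ↦
  rTensor_injective_iff_lcomp_surjective.1 <|
    (LinearMap.lTensor_inj_iff_rTensor_inj H f).1 (hf.2 H)

lemma PureInjective.of_comp_eq_id {D : Type} [AddCommGroup D] [Module R D]
    (hD : PureInjective R D) (s : N →ₗ[R] D) (r : D →ₗ[R] N) (h : r ∘ₗ s = .id) :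
    PureInjective R N := fun A B _ _ _ _ f hf g ↦ by
  obtain ⟨k, hk⟩ := hD A B f hf (s ∘ₗ g)
  refine ⟨r ∘ₗ k, ?_⟩
  rw [LinearMap.comp_assoc, hk, ← LinearMap.comp_assoc, h, LinearMap.id_comp]

/-- The canonical evaluation map of a module into its double character module. -/
def evalCharacterModule (R N : Type*) [CommRing R] [AddCommGroup N] [Module R N] :
    N →ₗ[R] CharacterModule (CharacterModule N) where
  toFun n := (AddMonoidHom.eval n : (N →+ AddCircle (1 : ℚ)) →+ AddCircle (1 : ℚ))
  map_add' n n' := CharacterModule.ext _ fun c ↦ map_add c n n'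
  map_smul' _ _ := rfl

lemma evalCharacterModule_injective : Function.Injective (evalCharacterModule R N) :=
  (injective_iff_map_eq_zero _).2 fun _ hn ↦
    CharacterModule.eq_zero_of_character_apply fun c ↦ DFunLike.congr_fun hn c

lemma isPureMono_evalCharacterModule : IsPureMono R (evalCharacterModule R N) := by
  refine ⟨evalCharacterModule_injective, fun Q _ _ ↦ ?_⟩
  rw [LinearMap.lTensor_inj_iff_rTensor_inj, rTensor_injective_iff_lcomp_surjective]
  exact fun g ↦
    ⟨CharacterModule.dual (CharacterModule.dual g ∘ₗ evalCharacterModule R Q), rfl⟩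

lemma PureInjective.exists_comp_evalCharacterModule_eq_id (hN : PureInjective R N) :
    ∃ r, r ∘ₗ evalCharacterModule R N = .id :=
  hN _ _ _ isPureMono_evalCharacterModule .id

variable {X Y : Type} [AddCommGroup X] [Module R X] [AddCommGroup Y] [Module R Y]

lemma PureInjective.isLinearRetract_lcomp (hN : PureInjective R N) (β : X →ₗ[R] Y) :
    IsLinearRetract (β.lcomp R N) (CharacterModule.dual (β.rTensor (CharacterModule N))) := by
  obtain ⟨r, hr⟩ := hN.exists_comp_evalCharacterModule_eq_id
  let e := evalCharacterModule R N
  refine ⟨CharacterModule.uncurry ∘ₗ e.compRight R, CharacterModule.uncurry ∘ₗ e.compRight R,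
    r.compRight R ∘ₗ CharacterModule.curry, r.compRight R ∘ₗ CharacterModule.curry,
    ?_, rfl, ?_, ?_⟩
  · refine LinearMap.ext fun f ↦ CharacterModule.homEquiv.symm.injective ?_
    rfl
  all_goals
    refine LinearMap.ext fun f ↦ ?_
    exact congrArg (· ∘ₗ f) hr

lemma PureInjective.isLinearRetract_mkQ_range_lcomp (hN : PureInjective R N) (β : X →ₗ[R] Y) :
    IsLinearRetract (β.lcomp R N).range.mkQ
      (CharacterModule.dual (β.rTensor (CharacterModule N)).ker.subtype) :=
  (hN.isLinearRetract_lcomp β).of_exact (LinearMap.exact_map_mkQ_range _)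
    (Submodule.mkQ_surjective _) (exact_characterModule_dual (LinearMap.exact_subtype_ker_map _))
    (CharacterModule.dual_surjective_of_injective _ (Submodule.injective_subtype _))

lemma PureInjective.quotient_range_lcomp (hN : PureInjective R N) (β : X →ₗ[R] Y) :
    PureInjective R ((X →ₗ[R] N) ⧸ (β.lcomp R N).range) := by
  obtain ⟨-, s, -, r, -, -, -, hrs⟩ := hN.isLinearRetract_mkQ_range_lcomp β
  exact (pureInjective_characterModule _).of_comp_eq_id s r hrs

lemma PureInjective.surjective_lcomp_linearMap_iff (hN : PureInjective R N) (β : X →ₗ[R] Y)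
    (F : Type) [AddCommGroup F] [Module R F] [Module.Flat R F] :
    Function.Surjective (β.lcomp R (F →ₗ[R] N)) ↔
      Subsingleton (F →ₗ[R] (X →ₗ[R] N) ⧸ (β.lcomp R N).range) := by
  rw [← ((hN.isLinearRetract_lcomp β).liftsAlong
    (liftsAlong_characterModule_dual F _)).surjective_comp_iff
    ((hN.isLinearRetract_mkQ_range_lcomp β).liftsAlong (liftsAlong_characterModule_dual F _))
    (LinearMap.exact_map_mkQ_range _) (Submodule.mkQ_surjective _)]
  constructor
  all_goals
    intro h v
    obtain ⟨k, hk⟩ := h v.flip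
    exact ⟨k.flip, congrArg LinearMap.flip hk⟩

theorem PureInjective.surjective_lcomp_iff_forall_isMaximal [IsNoetherianRing R]
    (hN : PureInjective R N) (β : X →ₗ[R] Y) :
    Function.Surjective (β.lcomp R N) ↔ ∀ (m : Ideal R) [m.IsMaximal],
      Function.Surjective (β.lcomp R (Localization.AtPrime m →ₗ[R] N)) := by
  have hflat (m : Ideal R) [m.IsMaximal] : Module.Flat R (Localization.AtPrime m) :=
    IsLocalization.flat _ m.primeCompl
  simp_rw [hN.surjective_lcomp_linearMap_iff β]
  rw [← LinearMap.range_eq_top, ← Submodule.Quotient.subsingleton_iff]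
  exact ⟨fun _ _ _ ↦ inferInstance,
    (hN.quotient_range_lcomp β).subsingleton_of_forall_isMaximal⟩

end PureInjectiveDuality

section ExtResolution

lemma exact_lcomp_iff_surjective_lcomp_liftQ {R A B C N : Type*} [CommRing R] [AddCommGroup A]
    [Module R A] [AddCommGroup B] [Module R B] [AddCommGroup C] [Module R C] [AddCommGroup N]
    [Module R N] {a : A →ₗ[R] B} {b : B →ₗ[R] C} (h : a.range ≤ b.ker) :
    Function.Exact (b.lcomp R N) (a.lcomp R N) ↔
      Function.Surjective ((a.range.liftQ b h).lcomp R N) := by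
  have hexact := LinearMap.exact_lcomp_of_exact_of_surjective N (LinearMap.exact_map_mkQ_range a)
    a.range.mkQ_surjective
  have hinj := LinearMap.lcomp_injective_of_surjective (N := N) (S := R) _ a.range.mkQ_surjective
  have hcomp (g : C →ₗ[R] N) :
      a.range.mkQ.lcomp R N ((a.range.liftQ b h).lcomp R N g) = b.lcomp R N g := by
    rw [LinearMap.lcomp_apply', LinearMap.lcomp_apply', LinearMap.comp_assoc,
      Submodule.liftQ_mkQ, LinearMap.lcomp_apply']
  constructor
  · intro hab f
    obtain ⟨g, hg⟩ := (hab _).1 (hexact.apply_apply_eq_zero f)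
    exact ⟨g, hinj ((hcomp g).trans hg)⟩
  · refine fun hsurj ↦ LinearMap.exact_of_comp_of_mem_range ?_ fun f hf ↦ ?_
    · ext g : 1
      rw [LinearMap.comp_apply, ← hcomp, hexact.apply_apply_eq_zero, LinearMap.zero_apply]
    · obtain ⟨f, rfl⟩ := (hexact f).1 hf
      obtain ⟨g, rfl⟩ := hsurj f
      exact ⟨g, (hcomp g).symm⟩

variable {R : Type} [CommRing R] {M : ModuleCat.{0} R}

lemma extV_iff_exact_lcomp (P : ProjectiveResolution M) (i : ℕ) (N : Type) [AddCommGroup N]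
    [Module R N] :
    extV R M (ModuleCat.of R N) i ↔
      Function.Exact ((P.complex.d i ((ComplexShape.up ℕ).prev i)).hom.lcomp R N)
        ((P.complex.d ((ComplexShape.up ℕ).next i) i).hom.lcomp R N) := by
  rw [extV, ← ModuleCat.isZero_iff_subsingleton,
    (P.isoExt (R := ℤ) i (ModuleCat.of R N)).isZero_iff,
    ← HomologicalComplex.exactAt_iff_isZero_homology, HomologicalComplex.exactAt_iff,
    ShortComplex.ShortExact.moduleCat_exact_iff_function_exact]
  let S := (P.complex.linearYonedaObj ℤ (ModuleCat.of R N)).sc i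
  exact (Function.Exact.iff_of_ladder_addEquiv
    (ModuleCat.homAddEquiv (M := P.complex.X _) (N := ModuleCat.of R N))
    (ModuleCat.homAddEquiv (M := P.complex.X i) (N := ModuleCat.of R N))
    (ModuleCat.homAddEquiv (M := P.complex.X _) (N := ModuleCat.of R N))
    (f₁₂ := S.f.hom.toAddMonoidHom) (f₂₃ := S.g.hom.toAddMonoidHom)
    (g₁₂ := ((P.complex.d i _).hom.lcomp R N).toAddMonoidHom)
    (g₂₃ := ((P.complex.d _ i).hom.lcomp R N).toAddMonoidHom) rfl rfl).symm

lemma exists_extV_iff_surjective_lcomp (M : ModuleCat.{0} R) (i : ℕ) :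
    ∃ (X Y : ModuleCat.{0} R) (β : X →ₗ[R] Y), ∀ (N : Type) [AddCommGroup N] [Module R N],
      extV R M (ModuleCat.of R N) i ↔ Function.Surjective (β.lcomp R N) := by
  let d := (projectiveResolution M).complex.d
  have hd : (d ((ComplexShape.up ℕ).next i) i).hom.range ≤
      (d i ((ComplexShape.up ℕ).prev i)).hom.ker := by
    rw [LinearMap.range_le_ker_iff, ← ModuleCat.hom_comp, HomologicalComplex.d_comp_d,
      ModuleCat.hom_zero]
  exact ⟨ModuleCat.of R (_ ⧸ _), _, (d _ i).hom.range.liftQ (d i _).hom hd, fun N _ _ ↦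
    (extV_iff_exact_lcomp _ i N).trans (exact_lcomp_iff_surjective_lcomp_liftQ hd)⟩

end ExtResolution

/-- for a commutative noetherian ring `R`, a pure-injective module `N`, `i ≥ 0`
and any module `M`, `Ext^i_R(M, N) = 0` iff `Ext^i_R(M, Hom_R(R_𝔪, N)) = 0` for every
maximal ideal `𝔪`. -/
theorem stmt5 (R : Type) [CommRing R] [IsNoetherianRing R]
    (N : Type) [AddCommGroup N] [Module R N] (hN : PureInjective R N)
    (i : ℕ) (M : ModuleCat.{0} R) :
    extV R M (ModuleCat.of R N) i ↔
      ∀ (𝔪 : PrimeSpectrum R), 𝔪.asIdeal.IsMaximal →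
        extV R M (ModuleCat.of R (Localization.AtPrime 𝔪.asIdeal →ₗ[R] N)) i := by
  obtain ⟨X, Y, β, hβ⟩ := exists_extV_iff_surjective_lcomp M i
  simp_rw [hβ]
  rw [hN.surjective_lcomp_iff_forall_isMaximal β]
  exact ⟨fun h 𝔪 _ ↦ h 𝔪.asIdeal, fun h m hm ↦ h ⟨m, hm.isPrime⟩ hm⟩
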